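/- Let u₁, u₂ be real numbers with |u₁| < 1 and |u₂| < 1. Define v₁ = u₁/√(1 − u₁²), v₂ = u₂/√(1 − u₂²), and v₃ = v₁ + v₂/√(1 − u₁²). Then 1 + 2·u₁·u₂·√(1 − u₂²) > 0 and v₃/√(1 + v₃²) = (u₁·√(1 − u₂²) + u₂)/√(1 + 2·u₁·u₂·√(1 − u₂²)). -/

import Mathlib

theorem deSitter_kinematic_addition_fig1
    (u₁ u₂ : ℝ) (h₁ : |u₁| < 1) (h₂ : |u₂| < 1)
    (v₁ v₂ v₃ : ℝ)
    (hv₁ : v₁ = u₁ / Real.sqrt (1 - u₁ ^ 2))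
    (hv₂ : v₂ = u₂ / Real.sqrt (1 - u₂ ^ 2))
    (hv₃ : v₃ = v₁ + v₂ / Real.sqrt (1 - u₁ ^ 2)) :
    0 < 1 + 2 * u₁ * u₂ * Real.sqrt (1 - u₂ ^ 2) ∧
    v₃ / Real.sqrt (1 + v₃ ^ 2) =
      (u₁ * Real.sqrt (1 - u₂ ^ 2) + u₂) /
        Real.sqrt (1 + 2 * u₁ * u₂ * Real.sqrt (1 - u₂ ^ 2)) := by
  have p₁ : 0 < 1 - u₁ ^ 2 := by
    have := (sq_lt_one_iff_abs_lt_one u₁).2 h₁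
    linarith
  have p₂ : 0 < 1 - u₂ ^ 2 := by
    have := (sq_lt_one_iff_abs_lt_one u₂).2 h₂
    linarith
  have q₁ := Real.sqrt_pos.2 p₁
  have q₂ := Real.sqrt_pos.2 p₂
  have e₁ := Real.sq_sqrt p₁.le
  have e₂ := Real.sq_sqrt p₂.le
  generalize Real.sqrt (1 - u₁ ^ 2) = s at *
  generalize Real.sqrt (1 - u₂ ^ 2) = t at *
  have hD : 1 + 2 * u₁ * u₂ * t = (s * t) ^ 2 + (u₁ * t + u₂) ^ 2 := by
    rw [mul_pow, e₁]
    linear_combination -e₂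
  have hst : 0 < s * t := mul_pos q₁ q₂
  have hpos : 0 < 1 + 2 * u₁ * u₂ * t := by
    rw [hD]
    positivity
  refine ⟨hpos, ?_⟩
  have hv : v₃ = (u₁ * t + u₂) / (s * t) := by
    rw [hv₃, hv₁, hv₂]
    field_simp
  have hs : 1 + v₃ ^ 2 = (1 + 2 * u₁ * u₂ * t) / (s * t) ^ 2 := by
    rw [hD, hv]
    field_simp
  rw [hs, Real.sqrt_div hpos.le, Real.sqrt_sq hst.le, hv, div_div_div_cancel_right₀ hst.ne']
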